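/- For every integer k ≥ 3 there exists a constant C(k) > 0 depending only on k such that for every n ≥ 2 and every n×n real matrix A with σ_A > 0: | E(𝒯_A^k) − ∫_ℝ x^k ψ(x) dx | ≤ C(k)·( β_A/n + (1/n)·Σ_{i,j=1}^{n} |â_{ij}|^k ). -/

import Mathlib

open Finset MeasureTheory

/-- Density of the standard normal distribution. -/
noncomputable def gaussD (x : ℝ) : ℝ := (Real.sqrt (2 * Real.pi))⁻¹ * Real.exp (-(x ^ 2) / 2)

/-- Distribution function of the standard normal distribution. -/
noncomputable def gaussCDF (x : ℝ) : ℝ := ∫ t in Set.Iic x, gaussD t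

section RankDefs

variable {m : ℕ}

/-- Row mean `a_{i·}`. -/
noncomputable def rowMean (A : Matrix (Fin m) (Fin m) ℝ) (i : Fin m) : ℝ := (∑ j, A i j) / (m : ℝ)

/-- Column mean `a_{·j}`. -/
noncomputable def colMean (A : Matrix (Fin m) (Fin m) ℝ) (j : Fin m) : ℝ := (∑ i, A i j) / (m : ℝ)

/-- Grand mean `a_{··}`. -/
noncomputable def totMean (A : Matrix (Fin m) (Fin m) ℝ) : ℝ := (∑ i, ∑ j, A i j) / (m : ℝ) ^ 2

/-- Centered entries `a_{ij} − a_{i·} − a_{·j} + a_{··}`. -/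
noncomputable def ctr (A : Matrix (Fin m) (Fin m) ℝ) (i j : Fin m) : ℝ :=
  A i j - rowMean A i - colMean A j + totMean A

/-- `σ_A²`. -/
noncomputable def sigma2 (A : Matrix (Fin m) (Fin m) ℝ) : ℝ :=
  (∑ i, ∑ j, ctr A i j ^ 2) / ((m : ℝ) - 1)

/-- `σ_A`. -/
noncomputable def sdev (A : Matrix (Fin m) (Fin m) ℝ) : ℝ := Real.sqrt (sigma2 A)

/-- Standardized matrix `Â = (â_{ij})`. -/
noncomputable def hatM (A : Matrix (Fin m) (Fin m) ℝ) : Matrix (Fin m) (Fin m) ℝ :=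
  fun i j => ctr A i j / sdev A

/-- `μ_A = n·a_{··}`. -/
noncomputable def muM (A : Matrix (Fin m) (Fin m) ℝ) : ℝ := (m : ℝ) * totMean A

/-- The linear rank statistic `T_A(π) = Σ_i a_{iπ(i)}`. -/
noncomputable def rankT (A : Matrix (Fin m) (Fin m) ℝ) (π : Equiv.Perm (Fin m)) : ℝ :=
  ∑ i, A i (π i)

/-- Expectation with respect to the uniform distribution on permutations. -/
noncomputable def permExp (f : Equiv.Perm (Fin m) → ℝ) : ℝ :=
  (∑ π : Equiv.Perm (Fin m), f π) / (Nat.factorial m : ℝ)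

/-- The standardized rank statistic `𝒯_A = (T_A − μ_A)/σ_A`. -/
noncomputable def rankTstd (A : Matrix (Fin m) (Fin m) ℝ) (π : Equiv.Perm (Fin m)) : ℝ :=
  (rankT A π - muM A) / sdev A

/-- `F_A`, the distribution function of `T_A`. -/
noncomputable def Fr (A : Matrix (Fin m) (Fin m) ℝ) (z : ℝ) : ℝ :=
  permExp (fun π => if rankT A π ≤ z then (1 : ℝ) else 0)

/-- `ℱ_A`, the distribution function of `𝒯_A`. -/
noncomputable def Fstd (A : Matrix (Fin m) (Fin m) ℝ) (z : ℝ) : ℝ :=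
  permExp (fun π => if rankTstd A π ≤ z then (1 : ℝ) else 0)

/-- `β_A = Σ_{i,j} |â_{ij}|³`. -/
noncomputable def betaM (A : Matrix (Fin m) (Fin m) ℝ) : ℝ := ∑ i, ∑ j, |hatM A i j| ^ 3

/-- `δ_A = Σ_{i,j} |â_{ij}|⁴`. -/
noncomputable def deltaM (A : Matrix (Fin m) (Fin m) ℝ) : ℝ := ∑ i, ∑ j, |hatM A i j| ^ 4

/-- `η_A = Σ_{i,j} |â_{ij}|⁵`. -/
noncomputable def etaM (A : Matrix (Fin m) (Fin m) ℝ) : ℝ := ∑ i, ∑ j, |hatM A i j| ^ 5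

/-- `D_A = (δ_A/n)^{1/2}`. -/
noncomputable def DM (A : Matrix (Fin m) (Fin m) ℝ) : ℝ := Real.sqrt (deltaM A / (m : ℝ))

/-- `E_A = (η_A/n)^{1/3}`. -/
noncomputable def EM (A : Matrix (Fin m) (Fin m) ℝ) : ℝ := (etaM A / (m : ℝ)) ^ ((1 : ℝ) / 3)

/-- `λ_{1,A} = (1/n)Σ_{i,j} â_{ij}³`. -/
noncomputable def lam1 (A : Matrix (Fin m) (Fin m) ℝ) : ℝ := (∑ i, ∑ j, hatM A i j ^ 3) / (m : ℝ)

/-- `λ_{2,A}`. -/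
noncomputable def lam2 (A : Matrix (Fin m) (Fin m) ℝ) : ℝ :=
  (∑ i, ∑ j, hatM A i j ^ 4) / (m : ℝ) + 3 / (m : ℝ)
    - 3 / (m : ℝ) ^ 2 *
        ∑ i, ∑ j, ∑ k, (hatM A i j ^ 2 * hatM A i k ^ 2 + hatM A i j ^ 2 * hatM A k j ^ 2)

/-- First-order Edgeworth expansion `e_{1,A}`. -/
noncomputable def edge1 (A : Matrix (Fin m) (Fin m) ℝ) (x : ℝ) : ℝ :=
  gaussCDF x - gaussD x * (lam1 A / 6) * (x ^ 2 - 1)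

/-- Second-order Edgeworth expansion `e_{2,A}`. -/
noncomputable def edge2 (A : Matrix (Fin m) (Fin m) ℝ) (x : ℝ) : ℝ :=
  gaussCDF x - gaussD x *
    (lam1 A / 6 * (x ^ 2 - 1) + lam2 A / 24 * (x ^ 3 - 3 * x)
      + lam1 A ^ 2 / 72 * (x ^ 5 - 10 * x ^ 3 + 15 * x))

/-- `k`-th iterated difference `Δ_y^k G`. -/
noncomputable def Δiter (y : ℝ) (k : ℕ) (G : ℝ → ℝ) : ℝ → ℝ :=
  (fun (G : ℝ → ℝ) (z : ℝ) => G (z + y) - G z)^[k] G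

/-- The interpolating polynomial `P_y^k(x; z, F)` of `F` at the points `z, z+y, …, z+ky`. -/
noncomputable def interp (y : ℝ) (k : ℕ) (z : ℝ) (F : ℝ → ℝ) (x : ℝ) : ℝ :=
  F z + ∑ s ∈ Finset.Icc 1 k,
    Δiter y s F z * ∏ i ∈ Finset.Icc 1 s, (x - z - ((i : ℝ) - 1) * y) / ((i : ℝ) * y)

end RankDefs

/-!
Composing a uniform permutation `π` with the transposition `(i j)` preserves its law and changes
`T = T_a(π)` by an increment `D` built from four entries. If the rows of `a` sum to zero, averaging
over `i` and `j` gives the Stein-type identity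
`E T g(T) = (1/n) E ∑_{i,j} a_{iπ(j)} (g(T + D) - g(T))`.

For `g(t) = t^(m+1)` the first-order term of `g(T + D) - g(T)` contributes `(m+1) E T^m` up to an
error of relative order `1/n`, so the moments of `T` satisfy the recursion
`μ_{m+2} = (m+1) μ_m` of the Gaussian moments up to a remainder of third order in the entries. The
same identity for `g(t) = t |t|^s` bounds `E |T|^r` by a multiple of `1 + (1/n) ∑ |a_{ij}|^r`,
which controls that remainder, and `1/n` is itself at most a multiple of `(1/n) ∑ |a_{ij}|³`.
-/

open Asymptotics Equiv Finset
open scoped BigOperators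

section Inequalities

theorem sum_mul_mul_sum_mul_le_of_monovary {ι R : Type*} [Fintype ι] [CommRing R] [LinearOrder R]
    [IsStrictOrderedRing R] {w f g : ι → R} (hw : ∀ x, 0 ≤ w x) (hfg : Monovary f g) :
    (∑ x, w x * f x) * (∑ x, w x * g x) ≤ (∑ x, w x) * ∑ x, w x * (f x * g x) := by
  have hpair : 0 ≤ ∑ x, ∑ y, w x * w y * ((f y - f x) * (g y - g x)) :=
    sum_nonneg fun x _ => sum_nonneg fun y _ =>
      mul_nonneg (mul_nonneg (hw x) (hw y)) (monovary_iff_forall_mul_nonneg.1 hfg x y)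
  have hexpand : ∑ x, ∑ y, w x * w y * ((f y - f x) * (g y - g x)) =
      2 * ((∑ x, w x) * ∑ x, w x * (f x * g x)) - 2 * ((∑ x, w x * f x) * ∑ x, w x * g x) := by
    rw [two_mul, two_mul]
    nth_rw 2 [mul_comm (∑ x, w x)]
    nth_rw 2 [mul_comm (∑ x, w x * f x)]
    simp only [sum_mul_sum, ← sum_add_distrib, ← sum_sub_distrib]
    exact sum_congr rfl fun x _ => sum_congr rfl fun y _ => by ring
  linarith

section OrderedRing

variable {R : Type*} [CommRing R] [LinearOrder R] [IsStrictOrderedRing R]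

theorem pow_le_pow_add_pow {y : R} (hy : 0 ≤ y) {p q s : ℕ} (hpq : p ≤ q) (hqs : q ≤ s) :
    y ^ q ≤ y ^ p + y ^ s := by
  rcases le_total y 1 with h | h
  · exact (pow_le_pow_of_le_one hy h hpq).trans (le_add_of_nonneg_right (pow_nonneg hy s))
  · exact (pow_le_pow_right₀ h hqs).trans (le_add_of_nonneg_left (pow_nonneg hy p))

theorem add_add_add_pow_le {x y z w : R} (hx : 0 ≤ x) (hy : 0 ≤ y) (hz : 0 ≤ z) (hw : 0 ≤ w)
    (d : ℕ) : (x + y + z + w) ^ d ≤ 4 ^ d * (x ^ d + y ^ d + z ^ d + w ^ d) := by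
  have hexp : (2 : R) ^ (d - 1) ≤ 2 ^ d := pow_le_pow_right₀ one_le_two (Nat.sub_le d 1)
  calc (x + y + z + w) ^ d = ((x + y) + (z + w)) ^ d := by rw [← add_assoc]
    _ ≤ 2 ^ (d - 1) * ((x + y) ^ d + (z + w) ^ d) :=
        add_pow_le (add_nonneg hx hy) (add_nonneg hz hw) d
    _ ≤ 2 ^ d * (2 ^ d * (x ^ d + y ^ d) + 2 ^ d * (z ^ d + w ^ d)) := by
        gcongr
        · exact (add_pow_le hx hy d).trans (by gcongr)
        · exact (add_pow_le hz hw d).trans (by gcongr)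
    _ = 4 ^ d * (x ^ d + y ^ d + z ^ d + w ^ d) := by
        rw [show (4 : R) = 2 * 2 by norm_num, mul_pow]; ring

theorem abs_add_pow_sub_pow_le (m : ℕ) (x d : R) :
    |(x + d) ^ m - x ^ m| ≤ m * |d| * (|x| + |d|) ^ (m - 1) := by
  have hmax : max |x + d| |x| ≤ |x| + |d| :=
    max_le (abs_add_le x d) (le_add_of_nonneg_right (abs_nonneg d))
  calc |(x + d) ^ m - x ^ m| ≤ |x + d - x| * m * max |x + d| |x| ^ (m - 1) :=
        abs_pow_sub_pow_le ..
    _ = m * |d| * max |x + d| |x| ^ (m - 1) := by rw [add_sub_cancel_left, mul_comm |d|]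
    _ ≤ m * |d| * (|x| + |d|) ^ (m - 1) := by gcongr

theorem abs_add_pow_succ_sub_sub_le (m : ℕ) (x d : R) :
    |(x + d) ^ (m + 1) - x ^ (m + 1) - (m + 1) * d * x ^ m| ≤
      (m + 1) ^ 2 * |d| ^ 2 * (|x| + |d|) ^ (m - 1) := by
  induction m with
  | zero => simpa using sq_nonneg d
  | succ m ih =>
    have hx : |x| ≤ |x| + |d| := le_add_of_nonneg_right (abs_nonneg d)
    have hprev : |x| * |(x + d) ^ (m + 1) - x ^ (m + 1) - (m + 1) * d * x ^ m| ≤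
        (m + 1) ^ 2 * |d| ^ 2 * (|x| + |d|) ^ m := by
      rcases m with _ | p
      · simpa using sq_nonneg d
      · calc _ ≤ (|x| + |d|) * (((p + 1 : ℕ) + 1) ^ 2 * |d| ^ 2 * (|x| + |d|) ^ p) := by
              gcongr
              exact ih
          _ = _ := by ring
    calc |(x + d) ^ (m + 1 + 1) - x ^ (m + 1 + 1) - ((m + 1 : ℕ) + 1) * d * x ^ (m + 1)|
        = |x * ((x + d) ^ (m + 1) - x ^ (m + 1) - (m + 1) * d * x ^ m) +
            d * ((x + d) ^ (m + 1) - x ^ (m + 1))| := by push_cast; ring_nf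
      _ ≤ |x| * |(x + d) ^ (m + 1) - x ^ (m + 1) - (m + 1) * d * x ^ m| +
            |d| * |(x + d) ^ (m + 1) - x ^ (m + 1)| := by
          simpa only [abs_mul] using abs_add_le (x * _) (d * _)
      _ ≤ (m + 1) ^ 2 * |d| ^ 2 * (|x| + |d|) ^ m +
            |d| * ((m + 1 : ℕ) * |d| * (|x| + |d|) ^ m) := by
          gcongr
          exact abs_add_pow_sub_pow_le (m + 1) x d
      _ = ((m + 1) ^ 2 + (m + 1)) * (|d| ^ 2 * (|x| + |d|) ^ m) := by push_cast; ring
      _ ≤ ((m + 1 : ℕ) + 1) ^ 2 * (|d| ^ 2 * (|x| + |d|) ^ m) := by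
          gcongr
          push_cast
          linarith [(Nat.cast_nonneg m : (0 : R) ≤ m)]
      _ = ((m + 1 : ℕ) + 1) ^ 2 * |d| ^ 2 * (|x| + |d|) ^ (m + 1 - 1) := by
          rw [Nat.add_sub_cancel]; ring

theorem abs_add_mul_abs_pow_sub_le (s : ℕ) (x d : R) :
    |(x + d) * |x + d| ^ s - x * |x| ^ s| ≤ (s + 1) * |d| * (|x| + |d|) ^ s := by
  induction s with
  | zero => simp
  | succ s ih =>
    have habs : |(|x + d| - |x|)| ≤ |d| := by simpa using abs_abs_sub_abs_le (x + d) x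
    calc |(x + d) * |x + d| ^ (s + 1) - x * |x| ^ (s + 1)|
        = |(|x + d| - |x|) * ((x + d) * |x + d| ^ s) +
            |x| * ((x + d) * |x + d| ^ s - x * |x| ^ s)| := by ring_nf
      _ ≤ |(|x + d| - |x|)| * (|x + d| * |x + d| ^ s) +
            |x| * |(x + d) * |x + d| ^ s - x * |x| ^ s| := by
          simpa only [abs_mul, abs_pow, abs_abs] using
            abs_add_le ((|x + d| - |x|) * ((x + d) * |x + d| ^ s)) (|x| * _)
      _ ≤ |d| * ((|x| + |d|) * (|x| + |d|) ^ s) +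
            (|x| + |d|) * ((s + 1) * |d| * (|x| + |d|) ^ s) := by
          gcongr
          · exact abs_add_le x d
          · exact abs_add_le x d
          · exact le_add_of_nonneg_right (abs_nonneg d)
      _ = ((s + 1 : ℕ) + 1) * |d| * (|x| + |d|) ^ (s + 1) := by push_cast; ring

end OrderedRing

theorem isBigO_of_abs_le_mul {ι : Type*} {l : Filter ι} {f g : ι → ℝ} (c : ℝ)
    (h : ∀ x, |f x| ≤ c * g x) : f =O[l] g :=
  IsBigO.of_bound |c| <| .of_forall fun x =>
    (h x).trans <| (le_abs_self _).trans (abs_mul c (g x)).le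

theorem isBigO_of_nonneg_of_le_mul {ι : Type*} {l : Filter ι} {f g : ι → ℝ} (c : ℝ)
    (hf : ∀ x, 0 ≤ f x) (h : ∀ x, f x ≤ c * g x) : f =O[l] g :=
  isBigO_of_abs_le_mul c fun x => (abs_of_nonneg (hf x)).trans_le (h x)

end Inequalities

section Gaussian

theorem gaussD_eq_gaussianPDFReal : gaussD = ProbabilityTheory.gaussianPDFReal 0 1 := by
  ext x
  simp [gaussD, ProbabilityTheory.gaussianPDFReal]

theorem integrable_pow_mul_gaussD (m : ℕ) : Integrable fun x : ℝ => x ^ m * gaussD x := by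
  have hm : (-1 : ℝ) < m := neg_one_lt_zero.trans_le m.cast_nonneg
  refine ((integrable_rpow_mul_exp_neg_mul_sq (b := 1 / 2) (by norm_num) hm).const_mul
    (Real.sqrt (2 * Real.pi))⁻¹).congr (.of_forall fun x => ?_)
  simp only [gaussD, Real.rpow_natCast]
  ring_nf

theorem hasDerivAt_gaussD (x : ℝ) : HasDerivAt gaussD (-(x * gaussD x)) x := by
  have hexponent : HasDerivAt (fun x : ℝ => -(x ^ 2) / 2) (-x) x :=
    ((hasDerivAt_pow 2 x).neg.div_const 2).congr_deriv (by push_cast; ring)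
  exact (hexponent.exp.const_mul (Real.sqrt (2 * Real.pi))⁻¹).congr_deriv (by rw [gaussD]; ring)

theorem integral_gaussD : ∫ x, gaussD x = 1 := by
  rw [gaussD_eq_gaussianPDFReal]
  exact ProbabilityTheory.integral_gaussianPDFReal_eq_one 0 one_ne_zero

theorem integral_pow_succ_mul_gaussD (m : ℕ) :
    ∫ x, x ^ (m + 1) * gaussD x = m * ∫ x, x ^ (m - 1) * gaussD x := by
  have hderiv (x : ℝ) : HasDerivAt (fun x : ℝ => x ^ m * gaussD x)
      (m * (x ^ (m - 1) * gaussD x) - x ^ (m + 1) * gaussD x) x :=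
    ((hasDerivAt_pow m x).mul (hasDerivAt_gaussD x)).congr_deriv (by ring)
  have hint := (integrable_pow_mul_gaussD (m - 1)).const_mul (m : ℝ)
  have hint' := integrable_pow_mul_gaussD (m + 1)
  have hzero := integral_eq_zero_of_hasDerivAt_of_integrable hderiv (hint.sub hint')
    (integrable_pow_mul_gaussD m)
  rw [integral_sub hint hint', integral_const_mul] at hzero
  exact (sub_eq_zero.1 hzero).symm

end Gaussian

section SwapMean

variable {n : ℕ}

theorem permExp_eq_expect (f : Perm (Fin n) → ℝ) : permExp f = 𝔼 π, f π := by
  rw [permExp, Fintype.expect_eq_sum_div_card, Fintype.card_perm, Fintype.card_fin]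

/-- `n · E f(π, I, J)` for a uniform permutation `π` and independent uniform indices `I, J`; the
factor `n` makes the mean of a function of `(π, I)` alone equal to `E ∑ i, f(π, i)`. -/
noncomputable def swapMean (f : Perm (Fin n) → Fin n → Fin n → ℝ) : ℝ :=
  𝔼 π, (∑ i, ∑ j, f π i j) / n

theorem swapMean_add (f g : Perm (Fin n) → Fin n → Fin n → ℝ) :
    swapMean (fun π i j => f π i j + g π i j) = swapMean f + swapMean g := by
  simp only [swapMean, sum_add_distrib, add_div, expect_add_distrib]

theorem swapMean_sub (f g : Perm (Fin n) → Fin n → Fin n → ℝ) :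
    swapMean (fun π i j => f π i j - g π i j) = swapMean f - swapMean g := by
  simp only [swapMean, sum_sub_distrib, sub_div, expect_sub_distrib]

theorem swapMean_const_mul (c : ℝ) (f : Perm (Fin n) → Fin n → Fin n → ℝ) :
    swapMean (fun π i j => c * f π i j) = c * swapMean f := by
  simp only [swapMean, ← mul_sum, mul_div_assoc, ← mul_expect]

theorem swapMean_mono {f g : Perm (Fin n) → Fin n → Fin n → ℝ} (h : ∀ π i j, f π i j ≤ g π i j) :
    swapMean f ≤ swapMean g :=
  expect_le_expect fun π _ => by
    gcongr with i _ j _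
    exact h π i j

theorem abs_swapMean_le (f : Perm (Fin n) → Fin n → Fin n → ℝ) :
    |swapMean f| ≤ swapMean fun π i j => |f π i j| :=
  abs_le.2 ⟨by
    rw [neg_le, ← neg_one_mul, ← swapMean_const_mul]
    exact swapMean_mono fun π i j => by simpa using neg_le_abs (f π i j),
    swapMean_mono fun π i j => le_abs_self (f π i j)⟩

theorem swapMean_flip (f : Perm (Fin n) → Fin n → Fin n → ℝ) :
    swapMean (fun π i j => f π j i) = swapMean f :=
  expect_congr rfl fun _ _ => by rw [sum_comm]

theorem swapMean_comp_swap (f : Perm (Fin n) → Fin n → Fin n → ℝ) :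
    swapMean (fun π i j => f (π * swap i j) i j) = swapMean f := by
  simp only [swapMean, ← expect_div, expect_sum_comm]
  congr 1
  exact sum_congr rfl fun i _ => sum_congr rfl fun j _ =>
    Fintype.expect_equiv (Equiv.mulRight (swap i j)) _ _ fun _ => rfl

theorem swapMean_fst (f : Perm (Fin n) → Fin n → ℝ) :
    swapMean (fun π i _ => f π i) = 𝔼 π, ∑ i, f π i := by
  refine expect_congr rfl fun π _ => ?_
  rcases n.eq_zero_or_pos with rfl | hn
  · simp
  · simp only [sum_const, card_univ, Fintype.card_fin, nsmul_eq_mul, ← mul_sum]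
    field_simp

theorem sum_sum_apply_perm (φ : Fin n → Fin n → ℝ) (π : Perm (Fin n)) :
    ∑ i, ∑ j, φ i (π j) = ∑ i, ∑ j, φ i j :=
  sum_congr rfl fun i _ => Equiv.sum_comp π (φ i)

theorem swapMean_apply_mul (φ : Fin n → Fin n → ℝ) (g : Perm (Fin n) → ℝ) :
    swapMean (fun π i j => φ i (π j) * g π) = (∑ i, ∑ j, φ i j) / n * 𝔼 π, g π := by
  simp only [swapMean, ← sum_mul, sum_sum_apply_perm, mul_div_right_comm, ← mul_expect]

end SwapMean

section Transposition

variable {n : ℕ} (a : Matrix (Fin n) (Fin n) ℝ)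

/-- The increment `T_a(π ∘ (i j)) − T_a(π)` of the rank statistic under a transposition. -/
def swapIncrement (π : Perm (Fin n)) (i j : Fin n) : ℝ :=
  a i (π j) + a j (π i) - a i (π i) - a j (π j)

/-- The total size of the four entries that enter `swapIncrement`. It dominates each of them and
the increment itself, so it serves as the single error scale of the swap `(i j)`. -/
def swapSize (π : Perm (Fin n)) (i j : Fin n) : ℝ :=
  |a i (π j)| + |a j (π i)| + |a i (π i)| + |a j (π j)|

/-- `n · E R^d (|T| + R)^r`, with `R` the `swapSize` at uniform indices: the common bound for the
error terms of a moment expansion. The factor `|T| + R` dominates the statistic after the swap as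
well as before it. -/
noncomputable def swapRemainder (d r : ℕ) : ℝ :=
  swapMean fun π i j => swapSize a π i j ^ d * (|rankT a π| + swapSize a π i j) ^ r

/-- `(1/n) Σ_{i,j} |a_{ij}|^d`; at `a = Â` and `d = 3` this is `β_A / n`. -/
noncomputable def entryMoment (d : ℕ) : ℝ := (∑ i, ∑ j, |a i j| ^ d) / n

/-- `E |T_a|^r`, which enters the bounds on `swapRemainder`. -/
noncomputable def absMoment (r : ℕ) : ℝ := 𝔼 π, |rankT a π| ^ r

theorem rankT_mul_swap (π : Perm (Fin n)) (i j : Fin n) :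
    rankT a (π * swap i j) = rankT a π + swapIncrement a π i j := by
  rcases eq_or_ne i j with rfl | hij
  · simp [swapIncrement, ← Perm.one_def]
  have hsplit (f : Fin n → ℝ) : ∑ k, f k = f i + (f j + ∑ k ∈ (univ.erase i).erase j, f k) := by
    rw [add_sum_erase _ _ (mem_erase.2 ⟨hij.symm, mem_univ j⟩), add_sum_erase _ _ (mem_univ i)]
  have hrest : ∑ k ∈ (univ.erase i).erase j, a k ((π * swap i j) k) =
      ∑ k ∈ (univ.erase i).erase j, a k (π k) := sum_congr rfl fun k hk => by
    obtain ⟨hkj, hki, -⟩ := by simpa only [mem_erase] using hk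
    rw [Perm.mul_apply, swap_apply_of_ne_of_ne hki hkj]
  rw [rankT, rankT, hsplit, hsplit fun k => a k (π k), hrest, swapIncrement]
  simp only [Perm.mul_apply, swap_apply_left, swap_apply_right]
  ring

theorem swapSize_nonneg (π : Perm (Fin n)) (i j : Fin n) : 0 ≤ swapSize a π i j := by
  unfold swapSize; positivity

theorem swapSize_flip (π : Perm (Fin n)) (i j : Fin n) : swapSize a π j i = swapSize a π i j := by
  unfold swapSize; ring

theorem swapSize_mul_swap (π : Perm (Fin n)) (i j : Fin n) :
    swapSize a (π * swap i j) i j = swapSize a π i j := by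
  simp only [swapSize, Perm.mul_apply, swap_apply_left, swap_apply_right]
  ring

theorem abs_apply_right_le_swapSize (π : Perm (Fin n)) (i j : Fin n) :
    |a i (π j)| ≤ swapSize a π i j := by
  unfold swapSize
  linarith [abs_nonneg (a j (π i)), abs_nonneg (a i (π i)), abs_nonneg (a j (π j))]

theorem abs_apply_left_le_swapSize (π : Perm (Fin n)) (i j : Fin n) :
    |a i (π i)| ≤ swapSize a π i j := by
  unfold swapSize
  linarith [abs_nonneg (a i (π j)), abs_nonneg (a j (π i)), abs_nonneg (a j (π j))]

theorem abs_swapIncrement_le (π : Perm (Fin n)) (i j : Fin n) :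
    |swapIncrement a π i j| ≤ swapSize a π i j :=
  (abs_sub _ _).trans <| add_le_add_left ((abs_sub _ _).trans <|
    add_le_add_left (abs_add_le _ _) _) _

theorem abs_rankT_mul_swap_le (π : Perm (Fin n)) (i j : Fin n) :
    |rankT a (π * swap i j)| ≤ |rankT a π| + swapSize a π i j := by
  rw [rankT_mul_swap]
  exact (abs_add_le _ _).trans (add_le_add_right (abs_swapIncrement_le a π i j) _)

theorem entryMoment_nonneg (d : ℕ) : 0 ≤ entryMoment a d := by
  unfold entryMoment; positivity

theorem absMoment_nonneg (r : ℕ) : 0 ≤ absMoment a r :=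
  expect_nonneg fun _ _ => by positivity

theorem absMoment_le_add {p q s : ℕ} (hpq : p ≤ q) (hqs : q ≤ s) :
    absMoment a q ≤ absMoment a p + absMoment a s := by
  simp only [absMoment, ← expect_add_distrib]
  exact expect_le_expect fun π _ => pow_le_pow_add_pow (abs_nonneg _) hpq hqs

theorem swapRemainder_nonneg (d r : ℕ) : 0 ≤ swapRemainder a d r :=
  expect_nonneg fun π _ => div_nonneg (sum_nonneg fun i _ => sum_nonneg fun j _ => by
    have := swapSize_nonneg a π i j
    positivity) n.cast_nonneg

theorem abs_swapMean_le_swapRemainder {f : Perm (Fin n) → Fin n → Fin n → ℝ} {c : ℝ} {d r : ℕ}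
    (hf : ∀ π i j, |f π i j| ≤
      c * (swapSize a π i j ^ d * (|rankT a π| + swapSize a π i j) ^ r)) :
    |swapMean f| ≤ c * swapRemainder a d r := by
  rw [swapRemainder, ← swapMean_const_mul]
  exact (abs_swapMean_le f).trans (swapMean_mono hf)

theorem swapRemainder_le_swapMean (d r : ℕ) :
    swapRemainder a d r ≤ 4 ^ (d + 1) *
      swapMean fun π i j => |a i (π j)| ^ d * (|rankT a π| + 2 * swapSize a π i j) ^ r := by
  set F : Perm (Fin n) → Fin n → Fin n → ℝ :=
    fun π i j => (|rankT a π| + swapSize a π i j) ^ r with hF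
  set B := swapMean fun π i j => |a i (π j)| ^ d * (|rankT a π| + 2 * swapSize a π i j) ^ r
  have hright : swapMean (fun π i j => |a i (π j)| ^ d * F π i j) ≤ B :=
    swapMean_mono fun π i j => by
      have := swapSize_nonneg a π i j
      simp only [hF]
      gcongr
      linarith
  have hleft : swapMean (fun π i j => |a i (π i)| ^ d * F π i j) ≤ B := by
    rw [← swapMean_comp_swap]
    refine swapMean_mono fun π i j => ?_
    have hR := swapSize_nonneg a π i j
    have hT := abs_rankT_mul_swap_le a π i j
    simp only [hF, swapSize_mul_swap, Perm.mul_apply, swap_apply_left]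
    exact mul_le_mul_of_nonneg_left (pow_le_pow_left₀ (by positivity) (by linarith) r)
      (by positivity)
  have hright' : swapMean (fun π i j => |a j (π i)| ^ d * F π i j) ≤ B := by
    rw [← swapMean_flip]
    simpa only [hF, swapSize_flip] using hright
  have hleft' : swapMean (fun π i j => |a j (π j)| ^ d * F π i j) ≤ B := by
    rw [← swapMean_flip]
    simpa only [hF, swapSize_flip] using hleft
  calc swapRemainder a d r
      ≤ swapMean fun π i j => 4 ^ d * (|a i (π j)| ^ d * F π i j + |a j (π i)| ^ d * F π i j +
          |a i (π i)| ^ d * F π i j + |a j (π j)| ^ d * F π i j) := swapMean_mono fun π i j => by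
        have := swapSize_nonneg a π i j
        simp only [← add_mul, ← mul_assoc]
        gcongr
        exact add_add_add_pow_le (abs_nonneg _) (abs_nonneg _) (abs_nonneg _) (abs_nonneg _) d
    _ ≤ 4 ^ d * (B + B + B + B) := by
        simp only [swapMean_const_mul, swapMean_add]
        gcongr
    _ = 4 ^ (d + 1) * B := by ring

theorem swapRemainder_zero_le (d : ℕ) : swapRemainder a d 0 ≤ 4 ^ (d + 1) * entryMoment a d := by
  refine (swapRemainder_le_swapMean a d 0).trans_eq ?_
  simp only [pow_zero]
  rw [swapMean_apply_mul (fun i j => |a i j| ^ d) fun _ => 1, Fintype.expect_const, mul_one,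
    entryMoment]

theorem swapRemainder_le (d r : ℕ) :
    swapRemainder a d r ≤ 4 ^ (d + 1) * (2 ^ (r - 1) * (entryMoment a d * absMoment a r +
      2 ^ r * (4 ^ (d + r + 1) * entryMoment a (d + r)))) := by
  have hpoint (π : Perm (Fin n)) (i j : Fin n) :
      |a i (π j)| ^ d * (|rankT a π| + 2 * swapSize a π i j) ^ r ≤
        2 ^ (r - 1) * (|a i (π j)| ^ d * |rankT a π| ^ r +
          2 ^ r * (swapSize a π i j ^ (d + r) * (|rankT a π| + swapSize a π i j) ^ 0)) := by
    have hR := swapSize_nonneg a π i j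
    calc |a i (π j)| ^ d * (|rankT a π| + 2 * swapSize a π i j) ^ r
        ≤ |a i (π j)| ^ d * (2 ^ (r - 1) * (|rankT a π| ^ r + (2 * swapSize a π i j) ^ r)) := by
          gcongr
          exact add_pow_le (abs_nonneg _) (by positivity) r
      _ = 2 ^ (r - 1) * (|a i (π j)| ^ d * |rankT a π| ^ r +
            2 ^ r * (|a i (π j)| ^ d * swapSize a π i j ^ r)) := by rw [mul_pow]; ring
      _ ≤ _ := by
          rw [pow_zero, mul_one, pow_add]
          gcongr
          exact abs_apply_right_le_swapSize a π i j
  refine (swapRemainder_le_swapMean a d r).trans ?_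
  gcongr
  refine (swapMean_mono hpoint).trans ?_
  rw [swapMean_const_mul, swapMean_add, swapMean_const_mul,
    swapMean_apply_mul (fun i j => |a i j| ^ d) fun π => |rankT a π| ^ r]
  exact mul_le_mul_of_nonneg_left (add_le_add le_rfl <|
    mul_le_mul_of_nonneg_left (swapRemainder_zero_le a (d + r)) (by positivity)) (by positivity)

end Transposition

section SteinIdentities

variable {n : ℕ} {a : Matrix (Fin n) (Fin n) ℝ}

theorem swapMean_apply_mul_eq_zero (hrow : ∀ i, ∑ j, a i j = 0) (g : Perm (Fin n) → ℝ) :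
    swapMean (fun π i j => a i (π j) * g π) = 0 :=
  (swapMean_apply_mul (fun i j => a i j) g).trans (by simp [hrow])

theorem expect_rankT_mul (hrow : ∀ i, ∑ j, a i j = 0) (g : ℝ → ℝ) :
    𝔼 π, rankT a π * g (rankT a π) = swapMean fun π i j =>
      a i (π j) * (g (rankT a π + swapIncrement a π i j) - g (rankT a π)) := by
  simp only [mul_sub, swapMean_sub,
    swapMean_apply_mul_eq_zero hrow fun π => g (rankT a π), sub_zero]
  calc 𝔼 π, rankT a π * g (rankT a π)
      = swapMean fun π i _ => a i (π i) * g (rankT a π) := by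
        rw [swapMean_fst fun π i => a i (π i) * g (rankT a π)]
        simp only [← sum_mul, rankT]
    _ = _ := by
        rw [← swapMean_comp_swap]
        simp only [rankT_mul_swap, Perm.mul_apply, swap_apply_left]

theorem expect_rankT (hrow : ∀ i, ∑ j, a i j = 0) : 𝔼 π, rankT a π = 0 := by
  simpa [swapMean] using expect_rankT_mul hrow fun _ => 1

theorem swapMean_apply_mul_apply_mul (g : ℝ → ℝ) :
    swapMean (fun π i j => a i (π j) * a j (π i) * g (rankT a π)) =
      swapMean (fun π i j => a i (π i) * a j (π j) *
        (g (rankT a π + swapIncrement a π i j) - g (rankT a π))) +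
      (1 / n) * 𝔼 π, rankT a π ^ 2 * g (rankT a π) := by
  have hdiag : swapMean (fun π i j => a i (π i) * a j (π j) * g (rankT a π)) =
      (1 / n) * 𝔼 π, rankT a π ^ 2 * g (rankT a π) := by
    rw [swapMean, mul_expect]
    refine expect_congr rfl fun π _ => ?_
    simp only [← sum_mul, ← mul_sum, sq, rankT]
    ring
  rw [← swapMean_comp_swap]
  simp only [rankT_mul_swap, Perm.mul_apply, swap_apply_left, swap_apply_right, mul_sub,
    swapMean_sub, hdiag, sub_add_cancel]

theorem swapMean_apply_mul_swapIncrement_mul (hrow : ∀ i, ∑ j, a i j = 0)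
    (hcol : ∀ j, ∑ i, a i j = 0) (g : Perm (Fin n) → ℝ) :
    swapMean (fun π i j => a i (π j) * swapIncrement a π i j * g π) =
      entryMoment a 2 * 𝔼 π, g π + swapMean fun π i j => a i (π j) * a j (π i) * g π := by
  have hsq : swapMean (fun π i j => a i (π j) * a i (π j) * g π) =
      entryMoment a 2 * 𝔼 π, g π := by
    rw [swapMean_apply_mul (fun i j => a i j * a i j) g]
    simp only [← sq, entryMoment, sq_abs]
  have hsame_row : swapMean (fun π i j => a i (π j) * a i (π i) * g π) = 0 := by
    simp only [swapMean, ← sum_mul, Equiv.sum_comp, hrow, zero_mul, sum_const_zero, zero_div,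
      expect_const_zero]
  have hsame_col : swapMean (fun π i j => a i (π j) * a j (π j) * g π) = 0 := by
    rw [← swapMean_flip]
    simp only [swapMean, ← sum_mul, hcol, zero_mul, sum_const_zero, zero_div, expect_const_zero]
  simp only [swapIncrement, mul_sub, mul_add, sub_mul, add_mul, swapMean_sub, swapMean_add, hsq,
    hsame_row, hsame_col, sub_zero]

theorem expect_rankT_pow_add_two (hrow : ∀ i, ∑ j, a i j = 0) (hcol : ∀ j, ∑ i, a i j = 0)
    (m : ℕ) :
    𝔼 π, rankT a π ^ (m + 2) =
      swapMean (fun π i j => a i (π j) * ((rankT a π + swapIncrement a π i j) ^ (m + 1) -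
        rankT a π ^ (m + 1) - (m + 1) * swapIncrement a π i j * rankT a π ^ m)) +
      (m + 1) * (entryMoment a 2 * 𝔼 π, rankT a π ^ m +
        (swapMean (fun π i j => a i (π i) * a j (π j) *
          ((rankT a π + swapIncrement a π i j) ^ m - rankT a π ^ m)) +
        (1 / n) * 𝔼 π, rankT a π ^ (m + 2))) := by
  have hpow : ∀ t : ℝ, t ^ (m + 2) = t ^ 2 * t ^ m := fun t => by ring
  calc 𝔼 π, rankT a π ^ (m + 2) = 𝔼 π, rankT a π * rankT a π ^ (m + 1) := by
        simp only [pow_succ']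
    _ = swapMean fun π i j => a i (π j) * ((rankT a π + swapIncrement a π i j) ^ (m + 1) -
          rankT a π ^ (m + 1)) := expect_rankT_mul hrow (· ^ (m + 1))
    _ = swapMean (fun π i j => a i (π j) * ((rankT a π + swapIncrement a π i j) ^ (m + 1) -
          rankT a π ^ (m + 1) - (m + 1) * swapIncrement a π i j * rankT a π ^ m)) +
        (m + 1) * swapMean fun π i j =>
          a i (π j) * swapIncrement a π i j * rankT a π ^ m := by
        rw [← swapMean_const_mul, ← swapMean_add]
        congr! 4
        ring
    _ = _ := by
        rw [swapMean_apply_mul_swapIncrement_mul hrow hcol fun π => rankT a π ^ m,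
          swapMean_apply_mul_apply_mul (· ^ m)]
        simp only [hpow]

theorem absMoment_add_two_le (hrow : ∀ i, ∑ j, a i j = 0) (s : ℕ) :
    absMoment a (s + 2) ≤ (s + 1) * swapRemainder a 2 s := by
  have hStein : absMoment a (s + 2) = swapMean fun π i j => a i (π j) *
      ((rankT a π + swapIncrement a π i j) * |rankT a π + swapIncrement a π i j| ^ s -
        rankT a π * |rankT a π| ^ s) := by
    rw [← expect_rankT_mul hrow fun t => t * |t| ^ s]
    refine expect_congr rfl fun π _ => ?_
    rw [pow_add, sq_abs]
    ring
  rw [hStein]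
  refine (le_abs_self _).trans (abs_swapMean_le_swapRemainder a fun π i j => ?_)
  have hR := swapSize_nonneg a π i j
  have hD := abs_swapIncrement_le a π i j
  rw [abs_mul]
  calc _ ≤ swapSize a π i j * ((s + 1) * |swapIncrement a π i j| *
          (|rankT a π| + |swapIncrement a π i j|) ^ s) := by
        gcongr
        · exact abs_apply_right_le_swapSize a π i j
        · exact abs_add_mul_abs_pow_sub_le s _ _
    _ ≤ swapSize a π i j * ((s + 1) * swapSize a π i j *
          (|rankT a π| + swapSize a π i j) ^ s) := by gcongr
    _ = _ := by ring

theorem abs_swapMean_taylor_le (m : ℕ) :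
    |swapMean fun π i j => a i (π j) * ((rankT a π + swapIncrement a π i j) ^ (m + 1) -
      rankT a π ^ (m + 1) - (m + 1) * swapIncrement a π i j * rankT a π ^ m)| ≤
      (m + 1) ^ 2 * swapRemainder a 3 (m - 1) := by
  refine abs_swapMean_le_swapRemainder a fun π i j => ?_
  have hR := swapSize_nonneg a π i j
  have hD := abs_swapIncrement_le a π i j
  rw [abs_mul]
  calc _ ≤ swapSize a π i j * ((m + 1) ^ 2 * |swapIncrement a π i j| ^ 2 *
          (|rankT a π| + |swapIncrement a π i j|) ^ (m - 1)) := by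
        gcongr
        · exact abs_apply_right_le_swapSize a π i j
        · exact abs_add_pow_succ_sub_sub_le m _ _
    _ ≤ swapSize a π i j * ((m + 1) ^ 2 * swapSize a π i j ^ 2 *
          (|rankT a π| + swapSize a π i j) ^ (m - 1)) := by gcongr
    _ = _ := by ring

theorem abs_swapMean_diagonal_le (m : ℕ) :
    |swapMean fun π i j => a i (π i) * a j (π j) *
      ((rankT a π + swapIncrement a π i j) ^ m - rankT a π ^ m)| ≤
      m * swapRemainder a 3 (m - 1) := by
  refine abs_swapMean_le_swapRemainder a fun π i j => ?_
  have hR := swapSize_nonneg a π i j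
  have hD := abs_swapIncrement_le a π i j
  have hj : |a j (π j)| ≤ swapSize a π i j :=
    (abs_apply_left_le_swapSize a π j i).trans_eq (swapSize_flip a π i j)
  rw [abs_mul, abs_mul]
  calc _ ≤ swapSize a π i j * swapSize a π i j * (m * |swapIncrement a π i j| *
          (|rankT a π| + |swapIncrement a π i j|) ^ (m - 1)) := by
        gcongr
        · exact abs_apply_left_le_swapSize a π i j
        · exact abs_add_pow_sub_pow_le m _ _
    _ ≤ swapSize a π i j * swapSize a π i j * (m * swapSize a π i j *
          (|rankT a π| + swapSize a π i j) ^ (m - 1)) := by gcongr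
    _ = _ := by ring

end SteinIdentities

section EntryMoments

variable {n : ℕ} (a : Matrix (Fin n) (Fin n) ℝ)

theorem entryMoment_le_add {p q s : ℕ} (hpq : p ≤ q) (hqs : q ≤ s) :
    entryMoment a q ≤ entryMoment a p + entryMoment a s := by
  simp only [entryMoment, ← add_div, ← sum_add_distrib]
  gcongr
  exact pow_le_pow_add_pow (abs_nonneg _) hpq hqs

theorem entryMoment_mul_entryMoment_le (d r : ℕ) :
    entryMoment a (2 + d) * entryMoment a (2 + r) ≤
      entryMoment a 2 * entryMoment a (2 + (d + r)) := by
  have hmono : Monovary (fun x : Fin n × Fin n => |a x.1 x.2| ^ d)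
      fun x => |a x.1 x.2| ^ r := fun x y hxy =>
    pow_le_pow_left₀ (abs_nonneg _) (lt_of_pow_lt_pow_left₀ r (abs_nonneg _) hxy).le d
  have hcheb := sum_mul_mul_sum_mul_le_of_monovary
    (w := fun x : Fin n × Fin n => |a x.1 x.2| ^ 2) (fun _ => by positivity) hmono
  simp only [← pow_add, Fintype.sum_prod_type] at hcheb
  simp only [entryMoment, div_mul_div_comm]
  gcongr ?_ / _

theorem three_mul_entryMoment_two_le :
    3 * entryMoment a 2 ≤ 1 / n + 2 * n * entryMoment a 3 := by
  rcases n.eq_zero_or_pos with rfl | hn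
  · simp [entryMoment]
  have hn' : (0 : ℝ) < n := Nat.cast_pos.2 hn
  -- AM-GM in the form `3 t² x ≤ x³ + 2 t³`, at `x = 1 / n`.
  have hpoint (t : ℝ) (ht : 0 ≤ t) : 3 * t ^ 2 ≤ 1 / n ^ 2 + 2 * n * t ^ 3 := by
    have : 0 ≤ (n * t - 1) ^ 2 * (2 * (n * t) + 1) := by positivity
    rw [div_add' _ _ _ (pow_pos hn' 2).ne', le_div_iff₀ (pow_pos hn' 2)]
    linarith
  calc 3 * entryMoment a 2 = (∑ i, ∑ j, 3 * |a i j| ^ 2) / n := by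
        simp only [← mul_sum, entryMoment, mul_div_assoc]
    _ ≤ (∑ i, ∑ j, (1 / n ^ 2 + 2 * n * |a i j| ^ 3)) / n := by
        gcongr with i _ j _
        exact hpoint _ (abs_nonneg _)
    _ = 1 / n + 2 * n * entryMoment a 3 := by
        simp only [sum_add_distrib, ← mul_sum, entryMoment, sum_const, card_univ,
          Fintype.card_fin, nsmul_eq_mul]
        field_simp

end EntryMoments

/-- An `n × n` matrix with the normalization of `Â`: vanishing row and column sums, and squares
adding up to `n - 1`. The size is a field, so that `f =O[⊤] g` for real functions on this type says
`|f| ≤ C |g|` with one constant for all matrices of all sizes. -/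
structure StandardizedMatrix where
  size : ℕ
  toMatrix : Matrix (Fin size) (Fin size) ℝ
  two_le_size : 2 ≤ size
  row_sum_eq_zero : ∀ i, ∑ j, toMatrix i j = 0
  col_sum_eq_zero : ∀ j, ∑ i, toMatrix i j = 0
  sum_sq_eq : ∑ i, ∑ j, toMatrix i j ^ 2 = size - 1

namespace StandardizedMatrix

theorem size_pos (a : StandardizedMatrix) : (0 : ℝ) < a.size :=
  Nat.cast_pos.2 (two_pos.trans_le a.two_le_size)

theorem entryMoment_two (a : StandardizedMatrix) :
    entryMoment a.toMatrix 2 = 1 - 1 / a.size := by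
  simp only [entryMoment, sq_abs, a.sum_sq_eq, sub_div, div_self a.size_pos.ne']

theorem entryMoment_two_le_one (a : StandardizedMatrix) : entryMoment a.toMatrix 2 ≤ 1 := by
  rw [a.entryMoment_two]
  exact sub_le_self _ (one_div_nonneg.2 a.size.cast_nonneg)

theorem one_div_size_le (a : StandardizedMatrix) :
    1 / (a.size : ℝ) ≤ 2 * entryMoment a.toMatrix 3 := by
  have hn := a.size_pos
  have hsize : (2 : ℝ) ≤ a.size := mod_cast a.two_le_size
  have hinv : 1 / (a.size : ℝ) ≤ 1 / 2 := one_div_le_one_div_of_le two_pos hsize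
  have h := three_mul_entryMoment_two_le a.toMatrix
  rw [a.entryMoment_two] at h
  rw [div_le_iff₀ hn]
  linarith

theorem entryMoment_three_mul_le (a : StandardizedMatrix) (v : ℕ) :
    entryMoment a.toMatrix 3 * entryMoment a.toMatrix (2 + v) ≤
      entryMoment a.toMatrix (3 + v) := by
  refine (entryMoment_mul_entryMoment_le a.toMatrix 1 v).trans ?_
  rw [← add_assoc]
  exact mul_le_of_le_one_left (entryMoment_nonneg _ _) a.entryMoment_two_le_one

theorem one_isBigO_one_add_entryMoment (w : ℕ) :
    (fun _ : StandardizedMatrix => (1 : ℝ)) =O[⊤] fun a => 1 + entryMoment a.toMatrix w :=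
  isBigO_of_nonneg_of_le_mul 1 (fun _ => zero_le_one) fun a => by
    simpa using entryMoment_nonneg a.toMatrix w

theorem entryMoment_isBigO_one_add {q w : ℕ} (hq : 2 ≤ q) (hqw : q ≤ w) :
    (fun a : StandardizedMatrix => entryMoment a.toMatrix q) =O[⊤]
      fun a => 1 + entryMoment a.toMatrix w :=
  isBigO_of_nonneg_of_le_mul 1 (fun _ => entryMoment_nonneg _ q) fun a => by
    rw [one_mul]
    exact (entryMoment_le_add _ hq hqw).trans (by gcongr; exact a.entryMoment_two_le_one)

theorem swapRemainder_isBigO (d r : ℕ) :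
    (fun a : StandardizedMatrix => swapRemainder a.toMatrix d r) =O[⊤] fun a =>
      entryMoment a.toMatrix d * absMoment a.toMatrix r + entryMoment a.toMatrix (d + r) := by
  refine isBigO_of_nonneg_of_le_mul (4 ^ (d + 1) * (2 ^ (r - 1) * (2 ^ r * 4 ^ (d + r + 1))))
    (fun _ => swapRemainder_nonneg _ d r) fun a => (swapRemainder_le a.toMatrix d r).trans ?_
  have hconst : (1 : ℝ) ≤ 2 ^ r * 4 ^ (d + r + 1) :=
    one_le_mul_of_one_le_of_one_le (one_le_pow₀ one_le_two) (one_le_pow₀ (by norm_num))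
  have hmain := le_mul_of_one_le_left
    (mul_nonneg (entryMoment_nonneg a.toMatrix d) (absMoment_nonneg a.toMatrix r)) hconst
  calc _ ≤ 4 ^ (d + 1) * (2 ^ (r - 1) * (2 ^ r * 4 ^ (d + r + 1) *
          (entryMoment a.toMatrix d * absMoment a.toMatrix r) +
          2 ^ r * (4 ^ (d + r + 1) * entryMoment a.toMatrix (d + r)))) :=
        mul_le_mul_of_nonneg_left (mul_le_mul_of_nonneg_left (add_le_add_left hmain _)
          (by positivity)) (by positivity)
    _ = _ := by ring

theorem absMoment_add_two_isBigO (s : ℕ) :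
    (fun a : StandardizedMatrix => absMoment a.toMatrix (s + 2)) =O[⊤]
      fun a => absMoment a.toMatrix s + entryMoment a.toMatrix (2 + s) := by
  have hStein : (fun a : StandardizedMatrix => absMoment a.toMatrix (s + 2)) =O[⊤]
      fun a => swapRemainder a.toMatrix 2 s :=
    isBigO_of_nonneg_of_le_mul (s + 1) (fun _ => absMoment_nonneg _ _) fun a =>
      absMoment_add_two_le a.row_sum_eq_zero s
  have hN (a : StandardizedMatrix) := entryMoment_nonneg a.toMatrix
  have hM (a : StandardizedMatrix) := absMoment_nonneg a.toMatrix s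
  refine hStein.trans <| (swapRemainder_isBigO 2 s).trans <| isBigO_of_nonneg_of_le_mul 1
    (fun a => add_nonneg (mul_nonneg (hN a 2) (hM a)) (hN a _)) fun a => ?_
  rw [one_mul]
  gcongr
  exact mul_le_of_le_one_left (hM a) a.entryMoment_two_le_one

theorem absMoment_isBigO {w : ℕ} (hw : 2 ≤ w) {r : ℕ} (hr : r ≤ w) :
    (fun a : StandardizedMatrix => absMoment a.toMatrix r) =O[⊤]
      fun a => 1 + entryMoment a.toMatrix w := by
  have hzero : (fun a : StandardizedMatrix => absMoment a.toMatrix 0) =O[⊤]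
      fun a => 1 + entryMoment a.toMatrix w := by
    simpa [absMoment] using one_isBigO_one_add_entryMoment w
  have hstep {s : ℕ} (hs : s + 2 ≤ w) (ih : (fun a : StandardizedMatrix =>
      absMoment a.toMatrix s) =O[⊤] fun a => 1 + entryMoment a.toMatrix w) :
      (fun a : StandardizedMatrix => absMoment a.toMatrix (s + 2)) =O[⊤]
        fun a => 1 + entryMoment a.toMatrix w :=
    (absMoment_add_two_isBigO s).trans <|
      ih.add (entryMoment_isBigO_one_add (Nat.le_add_right 2 s) (by omega))
  induction r using Nat.twoStepInduction with
  | zero => exact hzero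
  | one =>
    refine .trans (isBigO_of_nonneg_of_le_mul 1 (fun _ => absMoment_nonneg _ 1) fun a => ?_)
      (hzero.add (hstep hw hzero))
    rw [one_mul]
    exact absMoment_le_add a.toMatrix zero_le_one one_le_two
  | more s ih _ => exact hstep hr (ih (by omega))

theorem swapRemainder_three_isBigO {w r : ℕ} (hr : 3 + r ≤ w) :
    (fun a : StandardizedMatrix => swapRemainder a.toMatrix 3 r) =O[⊤]
      fun a => entryMoment a.toMatrix 3 + entryMoment a.toMatrix w := by
  obtain ⟨v, rfl⟩ := Nat.exists_eq_add_of_le ((Nat.le_add_right 3 r).trans hr)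
  have hN (a : StandardizedMatrix) := entryMoment_nonneg a.toMatrix
  have hM := absMoment_isBigO (Nat.le_add_right 2 v) (show r ≤ 2 + v by omega)
  have hprod : (fun a : StandardizedMatrix =>
      entryMoment a.toMatrix 3 * (1 + entryMoment a.toMatrix (2 + v))) =O[⊤]
      fun a => entryMoment a.toMatrix 3 + entryMoment a.toMatrix (3 + v) :=
    isBigO_of_nonneg_of_le_mul 1
      (fun a => mul_nonneg (hN a 3) (add_nonneg zero_le_one (hN a _))) fun a => by
        rw [one_mul, mul_add, mul_one]
        gcongr
        exact a.entryMoment_three_mul_le v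
  have hlast : (fun a : StandardizedMatrix => entryMoment a.toMatrix (3 + r)) =O[⊤]
      fun a => entryMoment a.toMatrix 3 + entryMoment a.toMatrix (3 + v) :=
    isBigO_of_nonneg_of_le_mul 1 (fun a => hN a _) fun a => by
      rw [one_mul]
      exact entryMoment_le_add _ (Nat.le_add_right 3 r) hr
  exact (swapRemainder_isBigO 3 r).trans <|
    (((isBigO_refl _ _).mul hM).trans hprod).add hlast

theorem expect_rankT_pow_div_size_isBigO {w r : ℕ} (hw : 2 ≤ w) (hr : r ≤ w) :
    (fun a : StandardizedMatrix => 1 / (a.size : ℝ) * 𝔼 π, rankT a.toMatrix π ^ r) =O[⊤]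
      fun a => entryMoment a.toMatrix 3 + entryMoment a.toMatrix w := by
  have hmoment : (fun a : StandardizedMatrix => 𝔼 π, rankT a.toMatrix π ^ r) =O[⊤]
      fun a => absMoment a.toMatrix r :=
    isBigO_of_abs_le_mul 1 fun a => by
      simpa only [one_mul, absMoment, abs_pow] using
        abs_expect_le (s := univ) fun π => rankT a.toMatrix π ^ r
  refine ((isBigO_refl _ _).mul (hmoment.trans (absMoment_isBigO hw hr))).trans <|
    isBigO_of_nonneg_of_le_mul 2 (fun a => ?_) fun a => ?_
  all_goals have hN := entryMoment_nonneg a.toMatrix w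
  · positivity
  have hinv : 1 / (a.size : ℝ) ≤ 1 :=
    (div_le_one a.size_pos).2 (mod_cast one_le_two.trans a.two_le_size)
  calc 1 / (a.size : ℝ) * (1 + entryMoment a.toMatrix w)
      ≤ 2 * entryMoment a.toMatrix 3 + 1 * entryMoment a.toMatrix w := by
        rw [mul_add, mul_one]
        gcongr
        exact a.one_div_size_le
    _ ≤ 2 * (entryMoment a.toMatrix 3 + entryMoment a.toMatrix w) := by linarith

theorem expect_rankT_pow_add_two_sub_isBigO {w m : ℕ} (hw : 3 ≤ w) (hm : m + 2 ≤ w) :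
    (fun a : StandardizedMatrix => 𝔼 π, rankT a.toMatrix π ^ (m + 2) -
      (m + 1) * 𝔼 π, rankT a.toMatrix π ^ m) =O[⊤]
      fun a => entryMoment a.toMatrix 3 + entryMoment a.toMatrix w := by
  have hremainder := swapRemainder_three_isBigO (show 3 + (m - 1) ≤ w by omega)
  have htaylor := (isBigO_of_abs_le_mul (l := ⊤) _ fun a : StandardizedMatrix =>
    abs_swapMean_taylor_le (a := a.toMatrix) m).trans hremainder
  have hdiagonal := (isBigO_of_abs_le_mul (l := ⊤) _ fun a : StandardizedMatrix =>
    abs_swapMean_diagonal_le (a := a.toMatrix) m).trans hremainder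
  have hdivsize {r : ℕ} (hr : r ≤ w) :=
    expect_rankT_pow_div_size_isBigO (Nat.le_of_succ_le hw) hr
  refine (htaylor.add (((hdiagonal.add (hdivsize hm)).sub
    (hdivsize (Nat.le_of_add_right_le hm))).const_mul_left (m + 1))).congr_left fun a => ?_
  have hrec := expect_rankT_pow_add_two a.row_sum_eq_zero a.col_sum_eq_zero m
  rw [a.entryMoment_two] at hrec
  linear_combination -hrec

theorem expect_rankT_pow_sub_integral_isBigO {w k : ℕ} (hw : 3 ≤ w) (hk : k ≤ w) :
    (fun a : StandardizedMatrix => 𝔼 π, rankT a.toMatrix π ^ k - ∫ x, x ^ k * gaussD x) =O[⊤]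
      fun a => entryMoment a.toMatrix 3 + entryMoment a.toMatrix w := by
  induction k using Nat.twoStepInduction with
  | zero =>
    refine (isBigO_zero _ _).congr_left fun a => ?_
    simp [integral_gaussD]
  | one =>
    refine (isBigO_zero _ _).congr_left fun a => ?_
    simpa [expect_rankT a.row_sum_eq_zero] using integral_pow_succ_mul_gaussD 0
  | more m ih _ =>
    refine ((expect_rankT_pow_add_two_sub_isBigO hw hk).add
      ((ih (by omega)).const_mul_left (m + 1))).congr_left fun a => ?_
    rw [integral_pow_succ_mul_gaussD (m + 1), Nat.add_sub_cancel]
    push_cast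
    ring

end StandardizedMatrix

section Standardization

variable {n : ℕ} (A : Matrix (Fin n) (Fin n) ℝ)

theorem sum_rowMean : ∑ i, rowMean A i = n * totMean A := by
  simp only [rowMean, totMean, ← sum_div]
  field_simp

theorem sum_colMean : ∑ j, colMean A j = n * totMean A := by
  simp only [colMean, totMean, ← sum_div]
  rw [sum_comm]
  field_simp

theorem mul_rowMean (i : Fin n) : n * rowMean A i = ∑ j, A i j :=
  mul_div_cancel₀ _ (Nat.cast_ne_zero.2 i.pos.ne')

theorem mul_colMean (j : Fin n) : n * colMean A j = ∑ i, A i j :=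
  mul_div_cancel₀ _ (Nat.cast_ne_zero.2 j.pos.ne')

theorem sum_ctr_row (i : Fin n) : ∑ j, ctr A i j = 0 := by
  simp only [ctr, sum_add_distrib, sum_sub_distrib, sum_const, card_univ, Fintype.card_fin,
    nsmul_eq_mul, sum_colMean, mul_rowMean]
  ring

theorem sum_ctr_col (j : Fin n) : ∑ i, ctr A i j = 0 := by
  simp only [ctr, sum_add_distrib, sum_sub_distrib, sum_const, card_univ, Fintype.card_fin,
    nsmul_eq_mul, sum_rowMean, mul_colMean]
  ring

theorem rankTstd_eq_rankT_hatM (π : Perm (Fin n)) : rankTstd A π = rankT (hatM A) π := by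
  simp only [rankTstd, rankT, hatM, ctr, ← sum_div, sum_add_distrib, sum_sub_distrib,
    Equiv.sum_comp π (colMean A), sum_rowMean, sum_colMean, sum_const, card_univ,
    Fintype.card_fin, nsmul_eq_mul, muM]
  ring

variable {A}

theorem sum_sq_hatM (hA : 0 < sdev A) : ∑ i, ∑ j, hatM A i j ^ 2 = n - 1 := by
  have hpos : 0 < sigma2 A := Real.sqrt_pos.1 hA
  have hsigma : sdev A ^ 2 = sigma2 A := Real.sq_sqrt hpos.le
  simp only [hatM, div_pow, ← sum_div, hsigma]
  rw [div_eq_iff hpos.ne', sigma2, mul_div_cancel₀]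
  intro h
  simp [sigma2, h] at hpos

end Standardization

/-- The matrix `Â` of a nondegenerate `A`, through which bounds for standardized matrices apply to
`A`. -/
noncomputable def StandardizedMatrix.ofMatrix {n : ℕ} (hn : 2 ≤ n)
    {A : Matrix (Fin n) (Fin n) ℝ} (hA : 0 < sdev A) : StandardizedMatrix where
  size := n
  toMatrix := hatM A
  two_le_size := hn
  row_sum_eq_zero i := by simp only [hatM, ← sum_div, sum_ctr_row, zero_div]
  col_sum_eq_zero j := by simp only [hatM, ← sum_div, sum_ctr_col, zero_div]
  sum_sq_eq := sum_sq_hatM hA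

/-- for every `k ≥ 3` there is a constant `C(k) > 0` such that
`|E(𝒯_A^k) − ∫ x^k ψ| ≤ C(k)(β_A/n + (1/n)Σ|â_{ij}|^k)` for all `A`. -/
theorem rank_statistic_kth_moment_bound (k : ℕ) (hk : 3 ≤ k) :
    ∃ C : ℝ, 0 < C ∧
      ∀ (n : ℕ), 2 ≤ n → ∀ A : Matrix (Fin n) (Fin n) ℝ, 0 < sdev A →
        |permExp (fun π => rankTstd A π ^ k) - ∫ x, x ^ k * gaussD x| ≤
          C * (betaM A / (n : ℝ) + (∑ i, ∑ j, |hatM A i j| ^ k) / (n : ℝ)) := by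
  obtain ⟨C, hC, hbound⟩ :=
    (StandardizedMatrix.expect_rankT_pow_sub_integral_isBigO hk le_rfl).exists_pos
  refine ⟨C, hC, fun n hn A hA => ?_⟩
  have hnonneg (a : StandardizedMatrix) :=
    add_nonneg (entryMoment_nonneg a.toMatrix 3) (entryMoment_nonneg a.toMatrix k)
  have h := isBigOWith_top.1 hbound (.ofMatrix hn hA)
  rw [Real.norm_of_nonneg (hnonneg _)] at h
  simp only [permExp_eq_expect, rankTstd_eq_rankT_hatM]
  exact h
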